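/- (Non-systematic RKRP codes are MDS with probability 1.) Let m, n, N ≥ 1 with N ≥ mn and set K = mn. For Lebesgue-almost every pair (P, Q) ∈ ℝ^{N×m} × ℝ^{N×n}, the following holds: for every subset R ⊆ [N] of row indices with |R| = K, the K×K submatrix of the row-wise Khatri-Rao product P ⊙ Q consisting of the rows in R is invertible. In particular, the N×K matrix G = P ⊙ Q is almost surely the generator matrix of a maximum distance separable code: the message vector w ∈ ℝ^K can be recovered from any K of the N entries of Gw. -/

import Mathlib

open MeasureTheory

/-- The row-wise Khatri-Rao product of `P : ℝ^{N×m}` and `Q : ℝ^{N×n}`. -/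
def rowKhatriRao {N m n : Type*} (P : Matrix N m ℝ) (Q : Matrix N n ℝ) :
    Matrix N (m × n) ℝ :=
  fun i jl => P i jl.1 * Q i jl.2

/-- The zero set of a continuous function on a finite-dimensional space is null as soon as the
function is nonzero at some point `x₀` and polynomial along every line through `x₀`. -/
theorem ae_ne_zero_of_polynomial_on_lines {E : Type*} [NormedAddCommGroup E] [NormedSpace ℝ E]
    [FiniteDimensional ℝ E] [MeasurableSpace E] [BorelSpace E] (μ : Measure E)
    [μ.IsAddHaarMeasure] {f : E → ℝ} (hf : Continuous f) {x₀ : E} (hx₀ : f x₀ ≠ 0)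
    (hline : ∀ v, ∃ p : Polynomial ℝ, ∀ t : ℝ, p.eval t = f (x₀ + t • v)) :
    ∀ᵐ x ∂μ, f x ≠ 0 := by
  have hmeas : MeasurableSet {z : E × ℝ | f (x₀ + z.2 • z.1) ≠ 0} :=
    (isOpen_ne_fun (by fun_prop) continuous_const).measurableSet
  have hfiber : ∀ᵐ v ∂μ, ∀ᵐ t : ℝ, f (x₀ + t • v) ≠ 0 := by
    refine Filter.Eventually.of_forall fun v => ?_
    obtain ⟨p, hp⟩ := hline v
    have hp0 : p ≠ 0 := by
      rintro rfl
      exact hx₀ (by simpa using (hp 0).symm)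
    have hfin : {t : ℝ | p.IsRoot t}.Finite := Polynomial.finite_setOfPred_isRoot hp0
    filter_upwards [hfin.countable.ae_notMem volume] with t ht h0
    exact ht ((hp t).trans h0)
  have hswap : ∀ᵐ t : ℝ, ∀ᵐ v ∂μ, f (x₀ + t • v) ≠ 0 :=
    (Measure.ae_ae_comm (p := fun v (t : ℝ) => f (x₀ + t • v) ≠ 0) hmeas).1 hfiber
  obtain ⟨t, ht, ht0⟩ := (hswap.and (Measure.ae_ne volume (0 : ℝ))).exists
  have hnull : μ ((fun v => t • v) ⁻¹' ((fun v => x₀ + v) ⁻¹' {x | ¬ f x ≠ 0})) = 0 := ht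
  rw [Measure.addHaar_preimage_smul μ ht0, measure_preimage_add] at hnull
  refine (mul_eq_zero.1 hnull).resolve_left ?_
  simpa using pow_pos (abs_pos.2 ht0) _

/-- Some pair of matrices has the identity as the selected square submatrix of its row-wise
Khatri-Rao product. -/
theorem exists_rowKhatriRao_submatrix_eq_one {N m n k : Type*} [DecidableEq m] [DecidableEq n]
    [DecidableEq k] (e : k ≃ m × n) {r : k → N} (hr : Function.Injective r) :
    ∃ (P : N → m → ℝ) (Q : N → n → ℝ),
      (rowKhatriRao (Matrix.of P) (Matrix.of Q)).submatrix r e = 1 := by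
  refine ⟨Function.extend r (fun a => Pi.single (e a).1 1) 0,
    Function.extend r (fun a => Pi.single (e a).2 1) 0, ?_⟩
  ext a b
  have hab : a = b ↔ (e b).1 = (e a).1 ∧ (e b).2 = (e a).2 := by
    rw [← Prod.ext_iff, e.apply_eq_iff_eq, eq_comm]
  simp only [rowKhatriRao, Matrix.submatrix_apply, Matrix.of_apply, hr.extend_apply,
    Pi.single_apply, Matrix.one_apply, hab]
  split_ifs <;> simp_all

/-- For almost every `(P, Q)`, a given square selection of rows of `P ⊙ Q` is invertible. -/
theorem ae_isUnit_rowKhatriRao_submatrix {N m n k : Type*} [Fintype N] [Fintype m] [Fintype n]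
    [Fintype k] [DecidableEq m] [DecidableEq n] [DecidableEq k] (e : k ≃ m × n) {r : k → N}
    (hr : Function.Injective r) :
    ∀ᵐ pq : (N → m → ℝ) × (N → n → ℝ) ∂volume,
      IsUnit ((rowKhatriRao (Matrix.of pq.1) (Matrix.of pq.2)).submatrix r e) := by
  obtain ⟨P, Q, hPQ⟩ := exists_rowKhatriRao_submatrix_eq_one e hr
  have hP : (volume : Measure (N → m → ℝ)).IsAddHaarMeasure :=
    Measure.pi.isAddHaarMeasure fun _ : N => (volume : Measure (m → ℝ))
  have hQ : (volume : Measure (N → n → ℝ)).IsAddHaarMeasure :=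
    Measure.pi.isAddHaarMeasure fun _ : N => (volume : Measure (n → ℝ))
  have : (volume : Measure ((N → m → ℝ) × (N → n → ℝ))).IsAddHaarMeasure :=
    Measure.prod.instIsAddHaarMeasure _ _
  have hdet : ∀ᵐ pq : (N → m → ℝ) × (N → n → ℝ) ∂volume,
      ((rowKhatriRao (Matrix.of pq.1) (Matrix.of pq.2)).submatrix r e).det ≠ 0 := by
    refine ae_ne_zero_of_polynomial_on_lines volume ?_ (x₀ := (P, Q)) ?_ fun v => ?_
    · refine Continuous.matrix_det (continuous_matrix fun a b => ?_)
      simp only [rowKhatriRao, Matrix.submatrix_apply, Matrix.of_apply]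
      fun_prop
    · simp [hPQ]
    · refine ⟨(Matrix.of fun a b =>
        (Polynomial.C (P (r a) (e b).1) + Polynomial.X * Polynomial.C (v.1 (r a) (e b).1)) *
        (Polynomial.C (Q (r a) (e b).2) +
          Polynomial.X * Polynomial.C (v.2 (r a) (e b).2))).det, fun t => ?_⟩
      rw [← Polynomial.coe_evalRingHom, RingHom.map_det]
      congr 1
      ext a b
      simp [rowKhatriRao, mul_comm t]
  filter_upwards [hdet] with pq hpq
  exact (Matrix.isUnit_iff_isUnit_det _).2 hpq.isUnit

/-- Non-systematic RKRP codes are MDS with probability 1: for Lebesgue-almost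
every `(P, Q)`, every `K × K` submatrix of `G = P ⊙ Q` (with `K = mn`)
obtained by selecting any `K` of its `N` rows is invertible; in particular the
message `w` can be recovered from any `K` entries of `G *ᵥ w`. -/
theorem nonsystematic_RKRP_is_MDS (m n N : ℕ)
    (hm : 1 ≤ m) (hn : 1 ≤ n) (hN : 1 ≤ N) (hNmn : m * n ≤ N) :
    ∀ᵐ pq : (Fin N → Fin m → ℝ) × (Fin N → Fin n → ℝ) ∂volume,
      ∀ r : Fin (m * n) → Fin N, Function.Injective r →
        (IsUnit
            ((rowKhatriRao (Matrix.of pq.1) (Matrix.of pq.2)).submatrix r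
              (⇑finProdFinEquiv.symm)) ∧
          ∀ w w' : Fin m × Fin n → ℝ,
            (∀ i : Fin (m * n),
                (rowKhatriRao (Matrix.of pq.1) (Matrix.of pq.2)).mulVec w (r i) =
                (rowKhatriRao (Matrix.of pq.1) (Matrix.of pq.2)).mulVec w' (r i)) →
              w = w') := by
  rw [ae_all_iff]
  intro r
  by_cases hr : Function.Injective r
  · filter_upwards [ae_isUnit_rowKhatriRao_submatrix finProdFinEquiv.symm hr] with pq hpq _
    refine ⟨hpq, fun w w' h => ?_⟩
    refine finProdFinEquiv.symm.surjective.injective_comp_right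
      (Matrix.mulVec_injective_of_isUnit hpq ?_)
    ext i
    simpa [Matrix.submatrix_mulVec_equiv, Function.comp_assoc] using h i
  · exact Filter.Eventually.of_forall fun _ h => absurd h hr
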